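/- Let v : [0,1] → ℝ be continuous, strictly decreasing, and positive on [0,1), and let β ∈ [1/2, 1]. Then the function g(κ) = v(κ)·(β + κ·(1 − 2β)) is strictly decreasing on [0,1], and κ = 1/2 is the unique solution in [0,1] of the equation v(κ)·(β + κ·(1 − 2β)) = v(1/2)/2. (That is, for β ≥ 1/2 the absolute threshold mechanism with contribution threshold v(1/2)/2 has a unique symmetric monotone equilibrium, in which exactly the users with quantile at most 1/2 contribute the threshold.) -/

import Mathlib

/-!
The factor `β + κ * (1 - 2 * β) = β * (1 - κ) + (1 - β) * κ` is the status that the boundary user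
gains by contributing. As a convex combination of `1 - κ` and `κ` it is nonnegative, and for
`1 / 2 ≤ β` it is nonincreasing in `κ`, so its product with the strictly decreasing ability is
strictly decreasing, hence injective. At `κ = 1 / 2` it equals `1 / 2`, whatever `β` is.
-/

section Product

variable {α R : Type*} [Preorder α] [MulZeroClass R] [LinearOrder R] [PosMulMono R]
  [MulPosStrictMono R] {s : Set α} {f w : α → R}

theorem strictAntiOn_mul_of_antitoneOn (hf : StrictAntiOn f s) (hw : AntitoneOn w s)
    (hf_pos : ∀ x ∈ s, ∀ y ∈ s, x < y → 0 < f x) (hw_pos : ∀ x ∈ s, ∀ y ∈ s, x < y → 0 < w x)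
    (hw_nonneg : ∀ x ∈ s, 0 ≤ w x) : StrictAntiOn (fun x ↦ f x * w x) s := by
  intro x hx y hy hxy
  -- `f y` may be negative, in which case `w y ≤ w x` only helps after passing to `max (f y) 0`.
  calc f y * w y
      ≤ max (f y) 0 * w y := mul_le_mul_of_nonneg_right (le_max_left _ _) (hw_nonneg y hy)
    _ ≤ max (f y) 0 * w x := mul_le_mul_of_nonneg_left (hw hx hy hxy.le) (le_max_right _ _)
    _ < f x * w x :=
      mul_lt_mul_of_pos_right (max_lt (hf hx hy hxy) (hf_pos x hx y hy hxy)) (hw_pos x hx y hy hxy)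

end Product

/-- The linear status of a user when a fraction `tg` of the others has a strictly higher badge and
a fraction `te` an equal one, a tie costing the share `β` of a defeat. -/
def linearStatus {R : Type*} [Ring R] (β tg te : R) : R :=
  1 - tg - β * te

/-- The status that the boundary user at quantile `κ` gains by contributing: a contributor ties
with the fraction `κ` of contributors, while a non-contributor is beaten by these and ties with the
remaining `1 - κ`. -/
def statusGain {R : Type*} [Ring R] (β κ : R) : R :=
  linearStatus β 0 κ - linearStatus β κ (1 - κ)

section CommRing

variable {R : Type*} [CommRing R]

theorem statusGain_eq (β κ : R) : statusGain β κ = β + κ * (1 - 2 * β) := by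
  unfold statusGain linearStatus
  ring

theorem statusGain_eq_convex_combination (β κ : R) :
    statusGain β κ = β * (1 - κ) + (1 - β) * κ := by
  rw [statusGain_eq]
  ring

end CommRing

section OrderedRing

variable {R : Type*} [CommRing R] [PartialOrder R] {β κ : R}

theorem statusGain_antitone [IsOrderedRing R] (hβ : 1 ≤ 2 * β) : Antitone (statusGain β) := by
  intro x y hxy
  rw [statusGain_eq, statusGain_eq]
  gcongr β + ?_
  exact mul_le_mul_of_nonpos_right hxy (sub_nonpos.mpr hβ)

theorem statusGain_nonneg [IsOrderedRing R] (hβ : β ∈ Set.Icc 0 1) (hκ : κ ∈ Set.Icc 0 1) :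
    0 ≤ statusGain β κ := by
  rw [statusGain_eq_convex_combination]
  exact add_nonneg (mul_nonneg hβ.1 (sub_nonneg.mpr hκ.2)) (mul_nonneg (sub_nonneg.mpr hβ.2) hκ.1)

theorem statusGain_pos [IsStrictOrderedRing R] (hβ : β ∈ Set.Ioc 0 1) (hκ : κ ∈ Set.Ico 0 1) :
    0 < statusGain β κ := by
  rw [statusGain_eq_convex_combination]
  exact add_pos_of_pos_of_nonneg (mul_pos hβ.1 (sub_pos.mpr hκ.2))
    (mul_nonneg (sub_nonneg.mpr hβ.2) hκ.1)

end OrderedRing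

theorem statusGain_one_half {K : Type*} [Field K] [NeZero (2 : K)] (β : K) :
    statusGain β (1 / 2) = 1 / 2 := by
  rw [statusGain_eq]
  field

section OrderedField

variable {K : Type*} [Field K] [LinearOrder K] [IsStrictOrderedRing K] {v : K → K} {β : K}

theorem strictAntiOn_mul_statusGain (hv_anti : StrictAntiOn v (Set.Icc 0 1))
    (hv_pos : ∀ q ∈ Set.Ico 0 1, 0 < v q) (hβ : β ∈ Set.Icc (1 / 2) 1) :
    StrictAntiOn (fun κ ↦ v κ * statusGain β κ) (Set.Icc 0 1) := by
  have hβ_pos : 0 < β := one_half_pos.trans_le hβ.1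
  have mem_Ico_of_lt : ∀ x ∈ Set.Icc (0 : K) 1, ∀ y ∈ Set.Icc (0 : K) 1, x < y →
      x ∈ Set.Ico 0 1 := fun x hx y hy hxy ↦ ⟨hx.1, hxy.trans_le hy.2⟩
  refine strictAntiOn_mul_of_antitoneOn hv_anti ?_ ?_ ?_ ?_
  · exact (statusGain_antitone (by linarith [hβ.1])).antitoneOn _
  · exact fun x hx y hy hxy ↦ hv_pos x (mem_Ico_of_lt x hx y hy hxy)
  · exact fun x hx y hy hxy ↦ statusGain_pos ⟨hβ_pos, hβ.2⟩ (mem_Ico_of_lt x hx y hy hxy)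
  · exact fun x hx ↦ statusGain_nonneg ⟨hβ_pos.le, hβ.2⟩ hx

theorem median_threshold_unique_equilibrium_tie_breaking_general
    (hv_anti : StrictAntiOn v (Set.Icc 0 1)) (hv_pos : ∀ q ∈ Set.Ico 0 1, 0 < v q)
    (hβ : β ∈ Set.Icc (1 / 2) 1) :
    StrictAntiOn (fun κ ↦ v κ * (β + κ * (1 - 2 * β))) (Set.Icc 0 1) ∧
    v (1 / 2) * (β + (1 / 2) * (1 - 2 * β)) = v (1 / 2) / 2 ∧
    ∀ κ ∈ Set.Icc 0 1, v κ * (β + κ * (1 - 2 * β)) = v (1 / 2) / 2 → κ = 1 / 2 := by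
  simp only [← statusGain_eq]
  have gain_anti := strictAntiOn_mul_statusGain hv_anti hv_pos hβ
  have median_indifferent : v (1 / 2) * statusGain β (1 / 2) = v (1 / 2) / 2 := by
    rw [statusGain_one_half, mul_one_div]
  have half_mem : (1 / 2 : K) ∈ Set.Icc 0 1 := ⟨one_half_pos.le, one_half_lt_one.le⟩
  exact ⟨gain_anti, median_indifferent, fun κ hκ indifferent ↦
    gain_anti.injOn hκ half_mem (indifferent.trans median_indifferent.symm)⟩

end OrderedField

theorem median_threshold_unique_equilibrium_tie_breaking
    (v : ℝ → ℝ)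
    (hv_cont : ContinuousOn v (Set.Icc 0 1))
    (hv_anti : StrictAntiOn v (Set.Icc 0 1))
    (hv_pos : ∀ q ∈ Set.Ico (0:ℝ) 1, 0 < v q)
    (β : ℝ) (hβ : β ∈ Set.Icc (1/2 : ℝ) 1) :
    StrictAntiOn (fun κ : ℝ => v κ * (β + κ * (1 - 2 * β))) (Set.Icc 0 1) ∧
    v (1/2) * (β + (1/2) * (1 - 2 * β)) = v (1/2) / 2 ∧
    (∀ κ ∈ Set.Icc (0:ℝ) 1, v κ * (β + κ * (1 - 2 * β)) = v (1/2) / 2 → κ = 1/2) :=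
  median_threshold_unique_equilibrium_tie_breaking_general hv_anti hv_pos hβ
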